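/- Let Ω ⊆ ℝ^m be an open connected set, let α ∈ (1/2, 1], and let f, g : Ω → ℝ^{2n+1} be locally α-Hölder continuous as maps into ℍ^n (with respect to the Korányi metric). If the first 2n components of f and g agree, i.e. f^{x_j} = g^{x_j} and f^{y_j} = g^{y_j} on Ω for j = 1, …, n, then there is a constant c ∈ ℝ such that g^t(x) = f^t(x) + c for all x ∈ Ω, where f^t, g^t denote the last components. -/

import Mathlib

open Metric Set MeasureTheory Topology

/-- The index of the coordinate `x_j` in `ℝ^{2n+1}`. -/
def xI (n : ℕ) (j : Fin n) : Fin (2*n+1) := ⟨2*j.1, by have := j.2; omega⟩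

/-- The index of the coordinate `y_j` in `ℝ^{2n+1}`. -/
def yI (n : ℕ) (j : Fin n) : Fin (2*n+1) := ⟨2*j.1+1, by have := j.2; omega⟩

/-- The index of the coordinate `t` in `ℝ^{2n+1}`. -/
def tI (n : ℕ) : Fin (2*n+1) := Fin.last (2*n)

/-- The Korányi metric on the Heisenberg group `ℍ^n = ℝ^{2n+1}`:
`d_K(p,q) = (|z-z'|^4 + |t - t' + 2 ∑_j (x_j' y_j - x_j y_j')|^2)^{1/4}`. -/
noncomputable def dK (n : ℕ) (p q : EuclideanSpace ℝ (Fin (2*n+1))) : ℝ :=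
  ((∑ i : Fin (2*n), (p (Fin.castSucc i) - q (Fin.castSucc i)) ^ 2) ^ 2 +
    (p (tI n) - q (tI n) +
      2 * ∑ j : Fin n, (q (xI n j) * p (yI n j) - p (xI n j) * q (yI n j))) ^ 2) ^ ((1:ℝ)/4)

/-- The vertical part of the Korányi distance is at most the square of the distance. -/
theorem abs_vertical_le_sq_of_dK_le (n : ℕ) (p q : EuclideanSpace ℝ (Fin (2*n+1))) {K : ℝ}
    (h : dK n p q ≤ K) :
    |p (tI n) - q (tI n) +
      2 * ∑ j : Fin n, (q (xI n j) * p (yI n j) - p (xI n j) * q (yI n j))| ≤ K ^ 2 := by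
  unfold dK at h
  set A := ∑ i : Fin (2*n), (p (Fin.castSucc i) - q (Fin.castSucc i)) ^ 2
  set a := p (tI n) - q (tI n) +
      2 * ∑ j : Fin n, (q (xI n j) * p (yI n j) - p (xI n j) * q (yI n j))
  have h0 : 0 ≤ A ^ 2 + a ^ 2 := by positivity
  have h4 : ((A ^ 2 + a ^ 2) ^ ((1:ℝ)/4)) ^ 4 = A ^ 2 + a ^ 2 := by
    rw [← Real.rpow_natCast, ← Real.rpow_mul h0]
    norm_num
  have hK : A ^ 2 + a ^ 2 ≤ K ^ 4 := by
    rw [← h4]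
    exact pow_le_pow_left₀ (Real.rpow_nonneg h0 _) h 4
  exact abs_le_of_sq_le_sq (by nlinarith [sq_nonneg A]) (sq_nonneg K)

/-- Two pairs of points with the same horizontal components have vertical increments that differ by
at most the sum of the squares of the Korányi distances. -/
theorem abs_sub_vertical_le (n : ℕ) (p q p' q' : EuclideanSpace ℝ (Fin (2*n+1))) {K K' : ℝ}
    (h : dK n p q ≤ K) (h' : dK n p' q' ≤ K')
    (hp : ∀ j : Fin n, p (xI n j) = p' (xI n j) ∧ p (yI n j) = p' (yI n j))
    (hq : ∀ j : Fin n, q (xI n j) = q' (xI n j) ∧ q (yI n j) = q' (yI n j)) :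
    |(p' (tI n) - p (tI n)) - (q' (tI n) - q (tI n))| ≤ K ^ 2 + K' ^ 2 := by
  have e := abs_vertical_le_sq_of_dK_le n p q h
  have e' := abs_vertical_le_sq_of_dK_le n p' q' h'
  simp only [hp, hq] at e
  rw [abs_le] at *
  constructor <;> linarith

/-- A function with a Hölder estimate of exponent greater than `1` at a point has zero derivative
there. -/
theorem hasFDerivAt_zero_of_eventually_rpow_le {E F : Type*} [NormedAddCommGroup E]
    [NormedSpace ℝ E] [NormedAddCommGroup F] [NormedSpace ℝ F] {u : E → F} {x : E} {C β : ℝ}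
    (hβ : 1 < β) (h : ∀ᶠ y in 𝓝 x, ‖u y - u x‖ ≤ C * ‖y - x‖ ^ β) :
    HasFDerivAt u (0 : E →L[ℝ] F) x := by
  rw [hasFDerivAt_iff_isLittleO]
  have hO : (fun y => u y - u x - (0 : E →L[ℝ] F) (y - x)) =O[𝓝 x] fun y => ‖y - x‖ ^ β := by
    refine Asymptotics.IsBigO.of_bound C ?_
    filter_upwards [h] with y hy
    simpa [abs_of_nonneg (Real.rpow_nonneg (norm_nonneg (y - x)) β)] using hy
  refine hO.trans_isLittleO ?_
  have ht : Filter.Tendsto (fun y => ‖y - x‖ ^ (β - 1)) (𝓝 x) (𝓝 0) := by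
    have hc : ContinuousAt (fun y => ‖y - x‖ ^ (β - 1)) x :=
      ContinuousAt.rpow_const (by fun_prop) (Or.inr (by linarith))
    simpa [ContinuousAt, Real.zero_rpow (by linarith : β - 1 ≠ 0)] using hc
  have hl := ((Asymptotics.isLittleO_one_iff ℝ).2 ht).mul_isBigO
    (Asymptotics.isBigO_refl (fun y => ‖y - x‖) (𝓝 x))
  refine Asymptotics.IsLittleO.of_norm_right (hl.congr (fun y => ?_) fun y => one_mul _)
  rcases (norm_nonneg (y - x)).eq_or_lt with h0 | h0
  · rw [← h0, mul_zero, Real.zero_rpow (by linarith)]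
  · rw [Real.rpow_sub_one h0.ne', div_mul_cancel₀ _ h0.ne']

/-- Corollary 8.7 of the paper. Two locally `α`-Hölder maps into
`ℍ^n`, `1/2 < α ≤ 1`, on a connected open set, whose first `2n` components agree, differ
in the last component by an additive constant. -/
theorem stmt13 (m n : ℕ) (Ω : Set (EuclideanSpace ℝ (Fin m)))
    (hΩ : IsOpen Ω) (hconn : IsConnected Ω) (α : ℝ) (hα : 1/2 < α) (hα1 : α ≤ 1)
    (f g : EuclideanSpace ℝ (Fin m) → EuclideanSpace ℝ (Fin (2*n+1)))
    (hf : ∀ p ∈ Ω, ∃ r : ℝ, 0 < r ∧ ∃ C : ℝ, ∀ x ∈ ball p r ∩ Ω, ∀ y ∈ ball p r ∩ Ω,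
        dK n (f x) (f y) ≤ C * dist x y ^ α)
    (hg : ∀ p ∈ Ω, ∃ r : ℝ, 0 < r ∧ ∃ C : ℝ, ∀ x ∈ ball p r ∩ Ω, ∀ y ∈ ball p r ∩ Ω,
        dK n (g x) (g y) ≤ C * dist x y ^ α)
    (hxy : ∀ x ∈ Ω, ∀ j : Fin n, f x (xI n j) = g x (xI n j) ∧ f x (yI n j) = g x (yI n j)) :
    ∃ c : ℝ, ∀ x ∈ Ω, g x (tI n) = f x (tI n) + c := by
  have hd : ∀ x ∈ Ω, HasFDerivAt (fun y => g y (tI n) - f y (tI n))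
      (0 : EuclideanSpace ℝ (Fin m) →L[ℝ] ℝ) x := by
    intro x hx
    obtain ⟨r, hr, C, hC⟩ := hf x hx
    obtain ⟨s, hs, D, hD⟩ := hg x hx
    refine hasFDerivAt_zero_of_eventually_rpow_le (C := C ^ 2 + D ^ 2) (β := α * 2)
      (by linarith) ?_
    filter_upwards [hΩ.mem_nhds hx, ball_mem_nhds x hr, ball_mem_nhds x hs] with y hy hyr hys
    have e := abs_sub_vertical_le n _ _ _ _ (hC y ⟨hyr, hy⟩ x ⟨mem_ball_self hr, hx⟩)
      (hD y ⟨hys, hy⟩ x ⟨mem_ball_self hs, hx⟩) (hxy y hy) (hxy x hx)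
    rw [mul_pow, mul_pow, ← Real.rpow_mul_natCast dist_nonneg, dist_eq_norm, ← add_mul] at e
    simpa using e
  obtain ⟨c, hc⟩ := hΩ.exists_is_const_of_fderiv_eq_zero hconn.isPreconnected
    (fun x hx => (hd x hx).differentiableAt.differentiableWithinAt)
    (fun x hx => (hd x hx).fderiv)
  exact ⟨c, fun x hx => by linarith [hc x hx]⟩
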